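/- arXiv:1907.07432 — 4 statements merged into one kernel-verified Lean document; each statement's English description precedes it below -/
import Mathlib

section
/- Let p, q ∈ [0,1]. For every 4×4 complex matrix ρ, the quantum-switch output S(ρ) = Σ_{i,j∈{1,2}} W_{ij} (ρ ⊗ |+⟩⟨+|) W_{ij}† satisfies S(ρ) = [ (1−p)(1−q)·ρ + (1−p)q·(I₂⊗Z) ρ (I₂⊗Z)† + p(1−q)·(I₂⊗X) ρ (I₂⊗X)† ] ⊗ |+⟩⟨+| + pq·(I₂⊗(X·Z)) ρ (I₂⊗(X·Z))† ⊗ |−⟩⟨−|. -/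
open Matrix Kronecker Complex

noncomputable section

/-- Pauli X gate. -/
def PX : Matrix (Fin 2) (Fin 2) ℂ := !![0, 1; 1, 0]

/-- Pauli Z gate. -/
def PZ : Matrix (Fin 2) (Fin 2) ℂ := !![1, 0; 0, -1]

/-- 2×2 identity. -/
def I2 : Matrix (Fin 2) (Fin 2) ℂ := 1

def ket0 : Fin 2 → ℂ := ![1, 0]
def ket1 : Fin 2 → ℂ := ![0, 1]
def ketPlus : Fin 2 → ℂ := ((Real.sqrt 2 : ℂ))⁻¹ • (ket0 + ket1)
def ketMinus : Fin 2 → ℂ := ((Real.sqrt 2 : ℂ))⁻¹ • (ket0 - ket1)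

/-- Projector |v⟩⟨v|. -/
def proj (v : Fin 2 → ℂ) : Matrix (Fin 2) (Fin 2) ℂ := vecMulVec v (star v)

/-- Kronecker product, flattened to `Fin (m*n)` indices (row-major). -/
def kron {m n : ℕ} (A : Matrix (Fin m) (Fin m) ℂ) (B : Matrix (Fin n) (Fin n) ℂ) :
    Matrix (Fin (m * n)) (Fin (m * n)) ℂ :=
  Matrix.reindex finProdFinEquiv finProdFinEquiv (A ⊗ₖ B)

/-- Bit-flip channel Kraus operators: D₁ = √(1-p)·I₂, D₂ = √p·X. -/
def Dk (p : ℝ) : Fin 2 → Matrix (Fin 2) (Fin 2) ℂ :=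
  ![(Real.sqrt (1 - p) : ℂ) • I2, (Real.sqrt p : ℂ) • PX]

/-- Phase-flip channel Kraus operators: E₁ = √(1-q)·I₂, E₂ = √q·Z. -/
def Ek (q : ℝ) : Fin 2 → Matrix (Fin 2) (Fin 2) ℂ :=
  ![(Real.sqrt (1 - q) : ℂ) • I2, (Real.sqrt q : ℂ) • PZ]

/-- Quantum-switch Kraus operators W_{ij} = I₂ ⊗ (DᵢEⱼ ⊗ |0⟩⟨0| + EⱼDᵢ ⊗ |1⟩⟨1|),
with tensor ordering Alice ⊗ Bob ⊗ control (flattened row-major). -/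
def W (p q : ℝ) (i j : Fin 2) : Matrix (Fin 8) (Fin 8) ℂ :=
  kron I2 (kron (Dk p i * Ek q j) (proj ket0) + kron (Ek q j * Dk p i) (proj ket1))

/-- Quantum-switch output S(ρ) = Σᵢⱼ W_{ij} (ρ ⊗ |+⟩⟨+|) W_{ij}†. -/
def Sout (p q : ℝ) (ρ : Matrix (Fin 4) (Fin 4) ℂ) : Matrix (Fin 8) (Fin 8) ℂ :=
  ∑ i : Fin 2, ∑ j : Fin 2, W p q i j * kron ρ (proj ketPlus) * (W p q i j)ᴴ

/-!
If `ED = s • DE`, then the switched Kraus operator `DE ⊗ |0⟩⟨0| + ED ⊗ |1⟩⟨1|` factors as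
`DE ⊗ diag(1, s)`: the order in which the two operators act is imprinted on the control as a
relative phase. In the switch of two flip channels every pair of Kraus operators commutes, leaving
the control in `|+⟩`, except for the pair `(X, Z)`, which anticommutes and turns `|+⟩` into `|-⟩`.
-/

section Kron

variable {l m n : ℕ}

theorem kron_mul_kron (A C : Matrix (Fin m) (Fin m) ℂ) (B D : Matrix (Fin n) (Fin n) ℂ) :
    kron A B * kron C D = kron (A * C) (B * D) := by
  simp only [kron, reindex_apply, submatrix_mul_equiv, mul_kronecker_mul]

theorem conjTranspose_kron (A : Matrix (Fin m) (Fin m) ℂ) (B : Matrix (Fin n) (Fin n) ℂ) :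
    (kron A B)ᴴ = kron Aᴴ Bᴴ := by
  simp only [kron, reindex_apply, conjTranspose_submatrix, conjTranspose_kronecker]

theorem add_kron (A C : Matrix (Fin m) (Fin m) ℂ) (B : Matrix (Fin n) (Fin n) ℂ) :
    kron (A + C) B = kron A B + kron C B := by
  simp only [kron, add_kronecker, reindex_apply, submatrix_add, Pi.add_apply]

theorem kron_add (A : Matrix (Fin m) (Fin m) ℂ) (B D : Matrix (Fin n) (Fin n) ℂ) :
    kron A (B + D) = kron A B + kron A D := by
  simp only [kron, kronecker_add, reindex_apply, submatrix_add, Pi.add_apply]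

theorem smul_kron {R : Type*} [SMul R ℂ] [IsScalarTower R ℂ ℂ] (r : R)
    (A : Matrix (Fin m) (Fin m) ℂ) (B : Matrix (Fin n) (Fin n) ℂ) :
    kron (r • A) B = r • kron A B := by
  ext i j
  exact smul_mul_assoc r _ _

theorem kron_smul {R : Type*} [SMul R ℂ] [SMulCommClass R ℂ ℂ] (r : R)
    (A : Matrix (Fin m) (Fin m) ℂ) (B : Matrix (Fin n) (Fin n) ℂ) :
    kron A (r • B) = r • kron A B := by
  ext i j
  exact mul_smul_comm r _ _

theorem one_kron_one : kron (1 : Matrix (Fin m) (Fin m) ℂ) (1 : Matrix (Fin n) (Fin n) ℂ) = 1 := by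
  simp only [kron, one_kronecker_one, reindex_apply, submatrix_one_equiv]

theorem kron_assoc (A : Matrix (Fin l) (Fin l) ℂ) (B : Matrix (Fin m) (Fin m) ℂ)
    (C : Matrix (Fin n) (Fin n) ℂ) :
    reindex (finCongr (mul_assoc l m n)) (finCongr (mul_assoc l m n)) (kron (kron A B) C) =
      kron A (kron B C) := by
  have finProdFinEquiv_assoc (a : Fin l) (b : Fin m) (c : Fin n) :
      (finCongr (mul_assoc l m n)).symm (finProdFinEquiv (a, finProdFinEquiv (b, c))) =
        finProdFinEquiv (finProdFinEquiv (a, b), c) := by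
    ext
    simp only [finCongr_symm, finCongr_apply, Fin.val_cast, finProdFinEquiv_apply_val]
    ring
  ext i j
  obtain ⟨⟨a, bc⟩, rfl⟩ := finProdFinEquiv.surjective i
  obtain ⟨⟨b, c⟩, rfl⟩ := finProdFinEquiv.surjective bc
  obtain ⟨⟨a', bc'⟩, rfl⟩ := finProdFinEquiv.surjective j
  obtain ⟨⟨b', c'⟩, rfl⟩ := finProdFinEquiv.surjective bc'
  simp only [reindex_apply, submatrix_apply, finProdFinEquiv_assoc, kron,
    Equiv.symm_apply_apply, kroneckerMap_apply, mul_assoc]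

end Kron

theorem mul_proj_mul_conjTranspose (M : Matrix (Fin 2) (Fin 2) ℂ) (v : Fin 2 → ℂ) :
    M * proj v * Mᴴ = proj (M *ᵥ v) := by
  rw [proj, proj, mul_vecMulVec, vecMulVec_mul, star_mulVec]

theorem sqrt_smul_conj {n : Type*} [Fintype n] {c : ℝ} (hc : 0 ≤ c) (M X : Matrix n n ℂ) :
    (√c • M) * X * (√c • M)ᴴ = c • (M * X * Mᴴ) := by
  rw [conjTranspose_smul, star_trivial, smul_mul_assoc, smul_mul_assoc, mul_smul_comm, smul_smul,
    Real.mul_self_sqrt hc]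

/-- The relative phase gate `diag(1, s)` on the control qubit. -/
def phaseGate (s : ℂ) : Matrix (Fin 2) (Fin 2) ℂ := diagonal ![1, s]

theorem proj_ket0_add_smul_proj_ket1 (s : ℂ) : proj ket0 + s • proj ket1 = phaseGate s := by
  ext i j
  simp only [Matrix.add_apply, Matrix.smul_apply, proj, vecMulVec_apply, phaseGate]
  fin_cases i <;> fin_cases j <;> simp [ket0, ket1]

theorem phaseGate_one : phaseGate 1 = 1 := by
  ext i j
  fin_cases i <;> fin_cases j <;> simp [phaseGate]

theorem phaseGate_neg_one_mulVec_ketPlus : phaseGate (-1) *ᵥ ketPlus = ketMinus := by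
  ext i
  fin_cases i <;> simp [phaseGate, mulVec_diagonal, ketPlus, ketMinus, ket0, ket1]

section Switch

variable {n : ℕ}

/-- The Kraus operator of the quantum switch of two channels on an `n`-dimensional system, built
from Kraus operators `D` and `E` of the two channels; the control qubit is the last factor. -/
def switchKraus (D E : Matrix (Fin n) (Fin n) ℂ) : Matrix (Fin (n * 2)) (Fin (n * 2)) ℂ :=
  kron (D * E) (proj ket0) + kron (E * D) (proj ket1)

theorem switchKraus_smul_smul (a b : ℝ) (D E : Matrix (Fin n) (Fin n) ℂ) :
    switchKraus (a • D) (b • E) = (a * b) • switchKraus D E := by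
  simp only [switchKraus, smul_mul_smul_comm, mul_comm b a, smul_kron, smul_add]

theorem switchKraus_of_mul_eq_smul {D E : Matrix (Fin n) (Fin n) ℂ} {s : ℂ}
    (h : E * D = s • (D * E)) : switchKraus D E = kron (D * E) (phaseGate s) := by
  rw [switchKraus, h, smul_kron, ← kron_smul, ← kron_add, proj_ket0_add_smul_proj_ket1]

theorem switchKraus_conj_of_mul_eq_smul {D E : Matrix (Fin n) (Fin n) ℂ} {s : ℂ}
    (h : E * D = s • (D * E)) (ρ : Matrix (Fin n) (Fin n) ℂ) (v : Fin 2 → ℂ) :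
    switchKraus D E * kron ρ (proj v) * (switchKraus D E)ᴴ =
      kron (D * E * ρ * (D * E)ᴴ) (proj (phaseGate s *ᵥ v)) := by
  rw [switchKraus_of_mul_eq_smul h, conjTranspose_kron, kron_mul_kron, kron_mul_kron,
    mul_proj_mul_conjTranspose]

theorem switchKraus_conj_of_commute {D E : Matrix (Fin n) (Fin n) ℂ} (h : Commute D E)
    (ρ : Matrix (Fin n) (Fin n) ℂ) (v : Fin 2 → ℂ) :
    switchKraus D E * kron ρ (proj v) * (switchKraus D E)ᴴ =
      kron (D * E * ρ * (D * E)ᴴ) (proj v) := by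
  have hED : E * D = (1 : ℂ) • (D * E) := by rw [one_smul, h.eq]
  rw [switchKraus_conj_of_mul_eq_smul hED, phaseGate_one, one_mulVec]

theorem switchKraus_conj_of_anticommute {D E : Matrix (Fin n) (Fin n) ℂ}
    (h : E * D = -(D * E)) (ρ : Matrix (Fin n) (Fin n) ℂ) :
    switchKraus D E * kron ρ (proj ketPlus) * (switchKraus D E)ᴴ =
      kron (D * E * ρ * (D * E)ᴴ) (proj ketMinus) := by
  have hED : E * D = (-1 : ℂ) • (D * E) := by rw [neg_one_smul, h]
  rw [switchKraus_conj_of_mul_eq_smul hED, phaseGate_neg_one_mulVec_ketPlus]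

theorem switchKraus_sqrt_smul_conj {a b : ℝ} (ha : 0 ≤ a) (hb : 0 ≤ b)
    (D E : Matrix (Fin n) (Fin n) ℂ) (X : Matrix (Fin (n * 2)) (Fin (n * 2)) ℂ) :
    switchKraus (√a • D) (√b • E) * X * (switchKraus (√a • D) (√b • E))ᴴ =
      (a * b) • (switchKraus D E * X * (switchKraus D E)ᴴ) := by
  rw [switchKraus_smul_smul, ← Real.sqrt_mul ha, sqrt_smul_conj (mul_nonneg ha hb)]

/-- The output of the quantum switch of the channels with Kraus families `D` and `E`, on input `ρ`
and control state `|+⟩⟨+|`. -/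
def switchOutput {ι κ : Type*} [Fintype ι] [Fintype κ] (D : ι → Matrix (Fin n) (Fin n) ℂ)
    (E : κ → Matrix (Fin n) (Fin n) ℂ) (ρ : Matrix (Fin n) (Fin n) ℂ) :
    Matrix (Fin (n * 2)) (Fin (n * 2)) ℂ :=
  ∑ i, ∑ j, switchKraus (D i) (E j) * kron ρ (proj ketPlus) * (switchKraus (D i) (E j))ᴴ

/-- The Kraus operators of the channel that applies `U` with probability `p` and does nothing
otherwise. -/
def flipKraus (p : ℝ) (U : Matrix (Fin n) (Fin n) ℂ) : Fin 2 → Matrix (Fin n) (Fin n) ℂ :=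
  ![√(1 - p) • 1, √p • U]

theorem quantum_switch_output_general {U V : Matrix (Fin n) (Fin n) ℂ} (hUV : V * U = -(U * V))
    {p q : ℝ} (hp : p ∈ Set.Icc (0 : ℝ) 1) (hq : q ∈ Set.Icc (0 : ℝ) 1)
    (ρ : Matrix (Fin n) (Fin n) ℂ) :
    switchOutput (flipKraus p U) (flipKraus q V) ρ =
      kron (((1 - p) * (1 - q)) • ρ + ((1 - p) * q) • (V * ρ * Vᴴ)
          + (p * (1 - q)) • (U * ρ * Uᴴ)) (proj ketPlus)
      + (p * q) • kron (U * V * ρ * (U * V)ᴴ) (proj ketMinus) := by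
  have hp' : 0 ≤ 1 - p := sub_nonneg.mpr hp.2
  have hq' : 0 ≤ 1 - q := sub_nonneg.mpr hq.2
  simp only [switchOutput, Fin.sum_univ_two, flipKraus, cons_val_zero, cons_val_one]
  rw [switchKraus_sqrt_smul_conj hp' hq', switchKraus_sqrt_smul_conj hp' hq.1,
    switchKraus_sqrt_smul_conj hp.1 hq', switchKraus_sqrt_smul_conj hp.1 hq.1,
    switchKraus_conj_of_commute (Commute.one_left 1),
    switchKraus_conj_of_commute (Commute.one_left V),
    switchKraus_conj_of_commute (Commute.one_right U), switchKraus_conj_of_anticommute hUV]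
  simp only [one_mul, mul_one, conjTranspose_one, add_kron, smul_kron, add_assoc]

end Switch

theorem PZ_mul_PX : PZ * PX = -(PX * PZ) := by
  simp [PX, PZ]

theorem kron_I2_mul_kron_I2 (A B : Matrix (Fin 2) (Fin 2) ℂ) :
    kron I2 A * kron I2 B = kron I2 (A * B) := by
  rw [kron_mul_kron, I2, one_mul]

theorem kron_I2_PZ_mul_kron_I2_PX :
    kron I2 PZ * kron I2 PX = -(kron I2 PX * kron I2 PZ) := by
  rw [kron_I2_mul_kron_I2, kron_I2_mul_kron_I2, PZ_mul_PX, ← neg_one_smul ℂ, kron_smul,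
    neg_one_smul]

theorem kron_I2_Dk (p : ℝ) (i : Fin 2) : kron I2 (Dk p i) = flipKraus p (kron I2 PX) i := by
  fin_cases i <;> simp [Dk, flipKraus, kron_smul, I2, one_kron_one]

theorem kron_I2_Ek (q : ℝ) (j : Fin 2) : kron I2 (Ek q j) = flipKraus q (kron I2 PZ) j := by
  fin_cases j <;> simp [Ek, flipKraus, kron_smul, I2, one_kron_one]

theorem W_eq_switchKraus (p q : ℝ) (i j : Fin 2) :
    W p q i j = switchKraus (kron I2 (Dk p i)) (kron I2 (Ek q j)) := by
  rw [switchKraus, kron_I2_mul_kron_I2, kron_I2_mul_kron_I2]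
  refine (kron_add _ _ _).trans ?_
  rw [← kron_assoc, ← kron_assoc]
  -- Both `2 * (2 * 2)` and `2 * 2 * 2` compute to `8`, so the reindexing is definitionally trivial.
  rfl

theorem Sout_eq_switchOutput (p q : ℝ) (ρ : Matrix (Fin 4) (Fin 4) ℂ) :
    Sout p q ρ = switchOutput (flipKraus p (kron I2 PX)) (flipKraus q (kron I2 PZ)) ρ := by
  simp only [Sout, W_eq_switchKraus, kron_I2_Dk, kron_I2_Ek]
  rfl

theorem quantum_switch_output (p q : ℝ) (hp : p ∈ Set.Icc (0 : ℝ) 1)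
    (hq : q ∈ Set.Icc (0 : ℝ) 1) (ρ : Matrix (Fin 4) (Fin 4) ℂ) :
    Sout p q ρ =
      kron (((1 - p) * (1 - q) : ℝ) • ρ
          + ((1 - p) * q : ℝ) • (kron I2 PZ * ρ * (kron I2 PZ)ᴴ)
          + (p * (1 - q) : ℝ) • (kron I2 PX * ρ * (kron I2 PX)ᴴ)) (proj ketPlus)
      + (p * q : ℝ) • kron (kron I2 (PX * PZ) * ρ * (kron I2 (PX * PZ))ᴴ) (proj ketMinus) := by
  rw [Sout_eq_switchOutput, ← kron_I2_mul_kron_I2]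
  exact quantum_switch_output_general kron_I2_PZ_mul_kron_I2_PX hp hq ρ

end
end

section
/- Let p, q ∈ [0,1] with pq < 1 and let θ ∈ [0,π], φ ∈ [0,2π]. Set |ψ⟩ = cos(θ/2)|0⟩ + e^{iφ} sin(θ/2)|1⟩, ρ_ψ = |ψ⟩⟨ψ|, and let ρ̃_e = [ (1−p)(1−q)·ρ_e + p(1−q)·(I₂⊗X) ρ_e (I₂⊗X)† + (1−p)q·(I₂⊗Z) ρ_e (I₂⊗Z)† ] / (1−pq) with ρ_e = |Φ+⟩⟨Φ+|, partitioned into 2×2 blocks ρ̃_{e,ij}. Then the fidelity of Bob's teleported state for Alice's outcome 00, ρ_t = 2·(ρ_ψ^{11}ρ̃_{e,11} + ρ_ψ^{12}ρ̃_{e,12} + ρ_ψ^{21}ρ̃_{e,21} + ρ_ψ^{22}ρ̃_{e,22}), satisfies ⟨ψ| ρ_t |ψ⟩ = [ (1−p) − q(1−p)·sin²θ + p(1−q)·sin²θ·cos²φ ] / (1−pq). -/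
open Matrix Kronecker Complex

noncomputable section

/-- The EPR density matrix ρ_e = |Φ+⟩⟨Φ+|. -/
def rhoE : Matrix (Fin 4) (Fin 4) ℂ :=
  !![1/2, 0, 0, 1/2; 0, 0, 0, 0; 0, 0, 0, 0; 1/2, 0, 0, 1/2]

/-- The 2×2 block of a 4×4 matrix in (block-)position (a,b). -/
def blk (ρ : Matrix (Fin 4) (Fin 4) ℂ) (a b : Fin 2) : Matrix (Fin 2) (Fin 2) ℂ :=
  Matrix.of fun i j =>
    ρ ⟨2 * (a : ℕ) + (i : ℕ), by have := a.isLt; have := i.isLt; omega⟩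
      ⟨2 * (b : ℕ) + (j : ℕ), by have := b.isLt; have := j.isLt; omega⟩

/-- The Bloch-sphere pure state |ψ⟩ = cos(θ/2)|0⟩ + e^{iφ} sin(θ/2)|1⟩. -/
def ketPsi (θ φ : ℝ) : Fin 2 → ℂ :=
  ![(Real.cos (θ / 2) : ℂ), Complex.exp (φ * Complex.I) * (Real.sin (θ / 2) : ℂ)]

/-- Its density matrix ρ_ψ = |ψ⟩⟨ψ|. -/
def rhoPsi (θ φ : ℝ) : Matrix (Fin 2) (Fin 2) ℂ := vecMulVec (ketPsi θ φ) (star (ketPsi θ φ))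

/-- Bob's teleported state for Alice's outcome 00 given the shared pair ρ̃_e. -/
def rhoT (θ φ : ℝ) (ρ : Matrix (Fin 4) (Fin 4) ℂ) : Matrix (Fin 2) (Fin 2) ℂ :=
  (2 : ℂ) • (rhoPsi θ φ 0 0 • blk ρ 0 0 + rhoPsi θ φ 0 1 • blk ρ 0 1
    + rhoPsi θ φ 1 0 • blk ρ 1 0 + rhoPsi θ φ 1 1 • blk ρ 1 1)

/-- Fidelity ⟨ψ| ρ |ψ⟩ of a state ρ with respect to the pure state |ψ⟩. -/
def fidelity (θ φ : ℝ) (ρ : Matrix (Fin 2) (Fin 2) ℂ) : ℂ :=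
  star (ketPsi θ φ) ⬝ᵥ (ρ *ᵥ ketPsi θ φ)

/-
Given a pair `(1 ⊗ U) ρ_e (1 ⊗ U)ᴴ`, teleportation acts on the block index only, so Bob receives
`U ρ_ψ Uᴴ`, whose fidelity is `|⟨ψ|U|ψ⟩|²`. The three terms of the mixture are the cases
`U = 1, X, Z`, with `⟨ψ|X|ψ⟩ = sin θ cos φ` and `⟨ψ|Z|ψ⟩ = cos θ` the Bloch coordinates of `ψ`.
The fidelity is linear in the shared pair, and `cos² θ = 1 - sin² θ` gives the stated form.
-/

section PureStates

variable {𝕜 m n : Type*} [RCLike 𝕜] [Fintype m] [Fintype n]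

theorem star_dotProduct_conj_vecMulVec_mulVec (v : m → 𝕜) (w : n → 𝕜) (U : Matrix m n 𝕜) :
    star v ⬝ᵥ ((U * vecMulVec w (star w) * Uᴴ) *ᵥ v) = (‖star v ⬝ᵥ (U *ᵥ w)‖ : 𝕜) ^ 2 := by
  rw [mul_vecMulVec, vecMulVec_mul, ← star_mulVec, vecMulVec_mulVec, dotProduct_smul,
    op_smul_eq_mul, star_dotProduct (U *ᵥ w), ← RCLike.mul_conj, starRingEnd_apply]

end PureStates

section Blocks

variable (A B : Matrix (Fin 4) (Fin 4) ℂ) (a b : Fin 2)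

theorem blk_apply (i j : Fin 2) :
    blk A a b i j = A (finProdFinEquiv (a, i)) (finProdFinEquiv (b, j)) := by
  simp only [blk, of_apply]
  congr 1 <;> exact Fin.ext (Nat.add_comm _ _)

theorem blk_mul : blk (A * B) a b = ∑ c, blk A a c * blk B c b := by
  ext i j
  calc blk (A * B) a b i j
      = ∑ x : Fin 2 × Fin 2, A (finProdFinEquiv (a, i)) (finProdFinEquiv x)
          * B (finProdFinEquiv x) (finProdFinEquiv (b, j)) := by
        rw [blk_apply]
        exact mul_apply.trans
          ((finProdFinEquiv : Fin 2 × Fin 2 ≃ Fin 4).sum_comp fun k => A _ k * B k _).symm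
    _ = ∑ c, ∑ k, blk A a c i k * blk B c b k j := by
        simp only [Fintype.sum_prod_type, blk_apply]
    _ = (∑ c, blk A a c * blk B c b) i j := by
        simp only [Matrix.sum_apply, mul_apply]

theorem blk_conjTranspose : blk Aᴴ a b = (blk A b a)ᴴ := rfl

theorem blk_kron (M N : Matrix (Fin 2) (Fin 2) ℂ) : blk (kron M N) a b = M a b • N := by
  ext i j
  simp only [blk_apply, kron, reindex_apply, submatrix_apply, Equiv.symm_apply_apply,
    kroneckerMap_apply, Matrix.smul_apply, smul_eq_mul]

theorem blk_kron_I2_conj (U : Matrix (Fin 2) (Fin 2) ℂ) :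
    blk (kron I2 U * A * (kron I2 U)ᴴ) a b = U * blk A a b * Uᴴ := by
  let W : Matrix (Fin 4) (Fin 4) ℂ := kron I2 U
  have blk_W (c d : Fin 2) : blk W c d = if c = d then U else 0 :=
    (blk_kron c d I2 U).trans (by rw [I2, one_apply, ite_smul, one_smul, zero_smul])
  calc blk (W * A * Wᴴ) a b
      = ∑ d, (∑ c, blk W a c * blk A c d) * (blk W b d)ᴴ := by
        simp only [blk_mul, blk_conjTranspose]
    _ = U * blk A a b * Uᴴ := by
        simp only [blk_W, ite_mul, zero_mul, Finset.sum_ite_eq, Finset.mem_univ, if_true,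
          apply_ite conjTranspose, conjTranspose_zero, mul_ite, mul_zero]

theorem blk_rhoE : blk rhoE a b = (1 / 2 : ℂ) • single a b 1 := by
  ext i j
  fin_cases a <;> fin_cases b <;> fin_cases i <;> fin_cases j <;> simp [blk, rhoE]

end Blocks

section Teleportation

variable (θ φ : ℝ)

theorem rhoT_eq_sum (ρ : Matrix (Fin 4) (Fin 4) ℂ) :
    rhoT θ φ ρ = (2 : ℂ) • ∑ a, ∑ b, rhoPsi θ φ a b • blk ρ a b := by
  simp only [rhoT, Fin.sum_univ_two, add_assoc]

theorem rhoT_rhoE : rhoT θ φ rhoE = rhoPsi θ φ := by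
  conv_rhs => rw [matrix_eq_sum_single (rhoPsi θ φ)]
  simp only [rhoT_eq_sum, blk_rhoE, Finset.smul_sum, smul_single, smul_eq_mul]
  congr! 5
  ring

theorem rhoT_kron_I2_conj (U : Matrix (Fin 2) (Fin 2) ℂ) (ρ : Matrix (Fin 4) (Fin 4) ℂ) :
    rhoT θ φ (kron I2 U * ρ * (kron I2 U)ᴴ) = U * rhoT θ φ ρ * Uᴴ := by
  simp only [rhoT_eq_sum, blk_kron_I2_conj, Matrix.mul_smul, Matrix.smul_mul, Matrix.mul_sum,
    Matrix.sum_mul]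

theorem rhoT_add (ρ σ : Matrix (Fin 4) (Fin 4) ℂ) :
    rhoT θ φ (ρ + σ) = rhoT θ φ ρ + rhoT θ φ σ := by
  have blk_add (a b : Fin 2) : blk (ρ + σ) a b = blk ρ a b + blk σ a b := rfl
  simp only [rhoT_eq_sum, blk_add, smul_add, Finset.sum_add_distrib]

theorem rhoT_smul {R : Type*} [Monoid R] [DistribMulAction R ℂ] [SMulCommClass R ℂ ℂ] (r : R)
    (ρ : Matrix (Fin 4) (Fin 4) ℂ) : rhoT θ φ (r • ρ) = r • rhoT θ φ ρ := by
  have blk_smul (a b : Fin 2) : blk (r • ρ) a b = r • blk ρ a b := rfl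
  simp only [rhoT_eq_sum, blk_smul, Finset.smul_sum, smul_comm r]

end Teleportation

section Fidelity

variable (θ φ : ℝ)

theorem fidelity_add (ρ σ : Matrix (Fin 2) (Fin 2) ℂ) :
    fidelity θ φ (ρ + σ) = fidelity θ φ ρ + fidelity θ φ σ := by
  simp only [fidelity, add_mulVec, dotProduct_add]

theorem fidelity_smul {R : Type*} [Monoid R] [DistribMulAction R ℂ] [IsScalarTower R ℂ ℂ]
    [SMulCommClass R ℂ ℂ] (r : R) (ρ : Matrix (Fin 2) (Fin 2) ℂ) :
    fidelity θ φ (r • ρ) = r • fidelity θ φ ρ := by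
  simp only [fidelity, smul_mulVec, dotProduct_smul]

theorem fidelity_eq (M : Matrix (Fin 2) (Fin 2) ℂ) :
    fidelity θ φ M = M 0 0 * Real.cos (θ / 2) ^ 2 + M 1 1 * Real.sin (θ / 2) ^ 2
      + Real.cos (θ / 2) * Real.sin (θ / 2)
        * (M 0 1 * exp (φ * I) + M 1 0 * (starRingEnd ℂ) (exp (φ * I))) := by
  have unit_phase : (starRingEnd ℂ) (exp (φ * I)) * exp (φ * I) = 1 := by
    rw [conj_mul', norm_exp_ofReal_mul_I, ofReal_one, one_pow]
  simp only [fidelity, ketPsi, dotProduct, mulVec, Fin.sum_univ_two, Pi.star_apply, cons_val_zero,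
    cons_val_one, star_def, map_mul, conj_ofReal]
  linear_combination M 1 1 * Real.sin (θ / 2) ^ 2 * unit_phase

theorem fidelity_one : fidelity θ φ 1 = 1 := by
  rw [fidelity_eq]
  simp only [one_apply_eq, one_apply_ne, ne_eq, zero_ne_one, one_ne_zero, not_false_eq_true,
    one_mul, zero_mul, add_zero, mul_zero]
  exact_mod_cast Real.cos_sq_add_sin_sq (θ / 2)

theorem fidelity_PZ : fidelity θ φ PZ = Real.cos θ := by
  have double_angle : Real.cos θ = Real.cos (θ / 2) ^ 2 - Real.sin (θ / 2) ^ 2 := by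
    rw [← Real.cos_two_mul', mul_div_cancel₀ θ two_ne_zero]
  simp [fidelity_eq, PZ, double_angle, sub_eq_add_neg]

theorem fidelity_PX : fidelity θ φ PX = Real.sin θ * Real.cos φ := by
  have double_angle : Real.sin θ = 2 * Real.sin (θ / 2) * Real.cos (θ / 2) := by
    rw [← Real.sin_two_mul, mul_div_cancel₀ θ two_ne_zero]
  have two_re_phase : exp (φ * I) + (starRingEnd ℂ) (exp (φ * I)) = 2 * Real.cos φ := by
    rw [add_conj, exp_ofReal_mul_I_re, ofReal_mul, ofReal_ofNat]
  rw [fidelity_eq]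
  simp only [PX, of_apply, cons_val', cons_val_zero, cons_val_one, cons_val_fin_one, zero_mul,
    one_mul, zero_add, two_re_phase, double_angle]
  push_cast
  ring

theorem fidelity_rhoPsi : fidelity θ φ (rhoPsi θ φ) = 1 := by
  have unit_ket : star (ketPsi θ φ) ⬝ᵥ ketPsi θ φ = 1 := by
    simpa only [fidelity, one_mulVec] using fidelity_one θ φ
  rw [fidelity, rhoPsi, vecMulVec_mulVec, unit_ket, MulOpposite.op_one, one_smul, unit_ket]

-- On an operator `U` that is not a state, `fidelity θ φ U` is the amplitude `⟨ψ|U|ψ⟩`.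
theorem fidelity_conj_rhoPsi (U : Matrix (Fin 2) (Fin 2) ℂ) :
    fidelity θ φ (U * rhoPsi θ φ * Uᴴ) = (‖fidelity θ φ U‖ : ℂ) ^ 2 :=
  star_dotProduct_conj_vecMulVec_mulVec _ _ U

end Fidelity

theorem fidelity_rhoT_pauli_mixture (a b c θ φ : ℝ) :
    fidelity θ φ (rhoT θ φ (a • rhoE + b • (kron I2 PX * rhoE * (kron I2 PX)ᴴ)
        + c • (kron I2 PZ * rhoE * (kron I2 PZ)ᴴ))) =
      ((a + b * (Real.sin θ * Real.cos φ) ^ 2 + c * Real.cos θ ^ 2 : ℝ) : ℂ) := by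
  have fidelity_mixture (ρ σ τ : Matrix (Fin 4) (Fin 4) ℂ) :
      fidelity θ φ (rhoT θ φ (a • ρ + b • σ + c • τ)) =
        a * fidelity θ φ (rhoT θ φ ρ) + b * fidelity θ φ (rhoT θ φ σ)
          + c * fidelity θ φ (rhoT θ φ τ) := by
    simp only [rhoT_add, rhoT_smul, fidelity_add, fidelity_smul, real_smul]
  refine (fidelity_mixture _ _ _).trans ?_
  rw [rhoT_kron_I2_conj, rhoT_kron_I2_conj, rhoT_rhoE, fidelity_rhoPsi, fidelity_conj_rhoPsi,
    fidelity_conj_rhoPsi, fidelity_PX, fidelity_PZ, ← ofReal_mul, norm_real, norm_real]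
  simp only [Real.norm_eq_abs, ← ofReal_pow, sq_abs, mul_one, ← ofReal_mul, ← ofReal_add]

theorem fidelity_quantum_switch_plus_general (p q θ φ : ℝ) (hpq : p * q ≠ 1) :
    fidelity θ φ (rhoT θ φ (((1 - p * q : ℝ)⁻¹ : ℂ) •
        (((1 - p) * (1 - q) : ℝ) • rhoE
          + (p * (1 - q) : ℝ) • (kron I2 PX * rhoE * (kron I2 PX)ᴴ)
          + ((1 - p) * q : ℝ) • (kron I2 PZ * rhoE * (kron I2 PZ)ᴴ)))) =
      ((((1 - p) - q * (1 - p) * Real.sin θ ^ 2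
          + p * (1 - q) * Real.sin θ ^ 2 * Real.cos φ ^ 2) / (1 - p * q) : ℝ) : ℂ) := by
  have prob_plus_ne_zero : 1 - p * q ≠ 0 := sub_ne_zero.mpr hpq.symm
  rw [rhoT_smul, fidelity_smul, fidelity_rhoT_pauli_mixture, smul_eq_mul, ← ofReal_inv,
    ← ofReal_mul, ofReal_inj, inv_mul_eq_div, div_left_inj' prob_plus_ne_zero, Real.cos_sq' θ]
  ring

theorem fidelity_quantum_switch_plus (p q θ φ : ℝ) (hp : p ∈ Set.Icc (0 : ℝ) 1)
    (hq : q ∈ Set.Icc (0 : ℝ) 1) (hpq : p * q < 1)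
    (hθ : θ ∈ Set.Icc (0 : ℝ) Real.pi) (hφ : φ ∈ Set.Icc (0 : ℝ) (2 * Real.pi)) :
    fidelity θ φ (rhoT θ φ (((1 - p * q : ℝ)⁻¹ : ℂ) •
        (((1 - p) * (1 - q) : ℝ) • rhoE
          + (p * (1 - q) : ℝ) • (kron I2 PX * rhoE * (kron I2 PX)ᴴ)
          + ((1 - p) * q : ℝ) • (kron I2 PZ * rhoE * (kron I2 PZ)ᴴ)))) =
      ((((1 - p) - q * (1 - p) * Real.sin θ ^ 2
          + p * (1 - q) * Real.sin θ ^ 2 * Real.cos φ ^ 2) / (1 - p * q) : ℝ) : ℂ) :=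
  fidelity_quantum_switch_plus_general p q θ φ hpq.ne

end
end

section
/- For all p, q ∈ [0,1], (1/(4π)) · ∫₀^π ∫₀^{2π} [ (1−p) − q(1−p)·sin²θ + p(1−q)·sin²θ·cos²φ ] · sinθ dφ dθ = (3 − 2p − 2q + pq)/3. Consequently, if pq < 1, the average fidelity of the teleported qubit when the entanglement is distributed via a quantum switch, conditioned on the control-qubit outcome |+⟩, equals (3 − 2p − 2q + pq)/(3(1−pq)). -/
open Real

/-! In terms of the Bloch vector `(x, y, z) = (sin θ cos φ, sin θ sin φ, cos θ)`, the integrand is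
`(1 - p) * (1 - q) + q * (1 - p) * z ^ 2 + p * (1 - q) * x ^ 2`: no error leaves fidelity `1`, a
phase flip alone leaves fidelity `z ^ 2`, and a bit flip alone leaves fidelity `x ^ 2`. Each squared
coordinate averages to `1 / 3` over the sphere. -/

/-- The average of `f θ φ` over the Bloch sphere with respect to the uniform probability measure
`sin θ dθ dφ / (4π)`, encoded as an iterated integral over the polar angle `θ ∈ [0, π]` and the
azimuth `φ ∈ [0, 2π]`. -/
noncomputable def blochAverage (f : ℝ → ℝ → ℝ) : ℝ :=
  (1 / (4 * π)) * ∫ θ in (0 : ℝ)..π, ∫ φ in (0 : ℝ)..(2 * π), f θ φ * sin θ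

theorem blochAverage_add {f g : ℝ → ℝ → ℝ}
    (hf : Continuous (Function.uncurry f)) (hg : Continuous (Function.uncurry g)) :
    blochAverage (fun θ φ ↦ f θ φ + g θ φ) = blochAverage f + blochAverage g := by
  have inner_add (θ : ℝ) : ∫ φ in (0 : ℝ)..(2 * π), (f θ φ + g θ φ) * sin θ =
      (∫ φ in (0 : ℝ)..(2 * π), f θ φ * sin θ) + ∫ φ in (0 : ℝ)..(2 * π), g θ φ * sin θ := by
    simp only [add_mul]
    exact intervalIntegral.integral_add
      (Continuous.intervalIntegrable (by fun_prop) _ _)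
      (Continuous.intervalIntegrable (by fun_prop) _ _)
  have inner_continuous {h : ℝ → ℝ → ℝ} (hh : Continuous (Function.uncurry h)) :
      Continuous fun θ ↦ ∫ φ in (0 : ℝ)..(2 * π), h θ φ * sin θ :=
    intervalIntegral.continuous_parametric_intervalIntegral_of_continuous'
      (hh.mul (continuous_sin.comp continuous_fst)) _ _
  simp only [blochAverage, inner_add]
  rw [intervalIntegral.integral_add ((inner_continuous hf).intervalIntegrable _ _)
    ((inner_continuous hg).intervalIntegrable _ _), mul_add]

theorem blochAverage_const_mul (c : ℝ) (f : ℝ → ℝ → ℝ) :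
    blochAverage (fun θ φ ↦ c * f θ φ) = c * blochAverage f := by
  simp only [blochAverage, mul_assoc c, intervalIntegral.integral_const_mul]
  exact mul_left_comm _ _ _

theorem blochAverage_mul (g h : ℝ → ℝ) :
    blochAverage (fun θ φ ↦ g θ * h φ) =
      (1 / (4 * π)) * ((∫ θ in (0 : ℝ)..π, g θ * sin θ) * ∫ φ in (0 : ℝ)..(2 * π), h φ) := by
  simp only [blochAverage, mul_right_comm (g _), intervalIntegral.integral_const_mul,
    intervalIntegral.integral_mul_const]

theorem blochAverage_polar (g : ℝ → ℝ) :
    blochAverage (fun θ _ ↦ g θ) = (∫ θ in (0 : ℝ)..π, g θ * sin θ) / 2 := by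
  have h := blochAverage_mul g (fun _ ↦ 1)
  simp only [mul_one, integral_one, sub_zero] at h
  rw [h]
  field_simp
  ring

theorem blochAverage_const (c : ℝ) : blochAverage (fun _ _ ↦ c) = c := by
  rw [blochAverage_polar (fun _ ↦ c), intervalIntegral.integral_const_mul, integral_sin,
    cos_zero, cos_pi]
  ring

theorem blochAverage_cos_sq : blochAverage (fun θ _ ↦ cos θ ^ 2) = 1 / 3 := by
  rw [blochAverage_polar (fun θ ↦ cos θ ^ 2)]
  simp only [mul_comm _ (sin _), integral_sin_mul_cos_sq, cos_zero, cos_pi]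
  norm_num

theorem blochAverage_sq_sin_mul_cos : blochAverage (fun θ φ ↦ (sin θ * cos φ) ^ 2) = 1 / 3 := by
  have polar : ∫ θ in (0 : ℝ)..π, sin θ ^ 2 * sin θ = 4 / 3 := by
    simp only [← pow_succ, integral_sin_pow_three, cos_zero, cos_pi]
    norm_num
  have azimuthal : ∫ φ in (0 : ℝ)..(2 * π), cos φ ^ 2 = π := by
    rw [integral_cos_sq, sin_two_pi, sin_zero]
    ring
  simp only [mul_pow, blochAverage_mul, polar, azimuthal]
  field_simp

theorem blochAverage_const_add_sq_add_sq (a b c : ℝ) :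
    blochAverage (fun θ φ ↦ a + b * cos θ ^ 2 + c * (sin θ * cos φ) ^ 2) = a + (b + c) / 3 := by
  rw [blochAverage_add (by fun_prop) (by fun_prop), blochAverage_add (by fun_prop) (by fun_prop),
    blochAverage_const, blochAverage_const_mul, blochAverage_const_mul, blochAverage_cos_sq,
    blochAverage_sq_sin_mul_cos]
  ring

theorem average_fidelity_quantum_switch_plus_general (p q : ℝ) :
    blochAverage (fun θ φ ↦ (1 - p) - q * (1 - p) * sin θ ^ 2
        + p * (1 - q) * sin θ ^ 2 * cos φ ^ 2) = (3 - 2 * p - 2 * q + p * q) / 3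
    ∧ (p * q ≠ 1 →
        (1 / (1 - p * q)) * blochAverage (fun θ φ ↦ (1 - p) - q * (1 - p) * sin θ ^ 2
          + p * (1 - q) * sin θ ^ 2 * cos φ ^ 2) =
            (3 - 2 * p - 2 * q + p * q) / (3 * (1 - p * q))) := by
  have in_bloch_coordinates (θ φ : ℝ) :
      (1 - p) - q * (1 - p) * sin θ ^ 2 + p * (1 - q) * sin θ ^ 2 * cos φ ^ 2 =
        (1 - p) * (1 - q) + q * (1 - p) * cos θ ^ 2 + p * (1 - q) * (sin θ * cos φ) ^ 2 := by
    rw [cos_sq' θ]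
    ring
  have average : blochAverage (fun θ φ ↦ (1 - p) - q * (1 - p) * sin θ ^ 2
      + p * (1 - q) * sin θ ^ 2 * cos φ ^ 2) = (3 - 2 * p - 2 * q + p * q) / 3 := by
    simp only [in_bloch_coordinates, blochAverage_const_add_sq_add_sq]
    ring
  refine ⟨average, fun hpq ↦ ?_⟩
  have : 1 - p * q ≠ 0 := sub_ne_zero.mpr hpq.symm
  rw [average]
  field_simp

theorem average_fidelity_quantum_switch_plus (p q : ℝ)
    (hp : p ∈ Set.Icc (0 : ℝ) 1) (hq : q ∈ Set.Icc (0 : ℝ) 1) :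
    (1 / (4 * π)) * ∫ θ in (0 : ℝ)..π, (∫ φ in (0 : ℝ)..(2 * π),
        ((1 - p) - q * (1 - p) * Real.sin θ ^ 2
          + p * (1 - q) * Real.sin θ ^ 2 * Real.cos φ ^ 2) * Real.sin θ) =
      (3 - 2 * p - 2 * q + p * q) / 3
    ∧ (p * q < 1 →
        (1 / (1 - p * q)) * ((1 / (4 * π)) * ∫ θ in (0 : ℝ)..π, (∫ φ in (0 : ℝ)..(2 * π),
            ((1 - p) - q * (1 - p) * Real.sin θ ^ 2
              + p * (1 - q) * Real.sin θ ^ 2 * Real.cos φ ^ 2) * Real.sin θ)) =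
          (3 - 2 * p - 2 * q + p * q) / (3 * (1 - p * q))) :=
  (average_fidelity_quantum_switch_plus_general p q).imp_right fun h hpq ↦ h hpq.ne
end

section
/- For all p, q ∈ [0,1], (1/(4π)) · ∫₀^π ∫₀^{2π} [ (1−p) − q(1−2p)·sin²θ + p(1−2q)·sin²θ·cos²φ ] · sinθ dφ dθ = (3 − 2p − 2q + 2pq)/3. Consequently, the average fidelity of the teleported qubit when the EPR pair is distributed through a classical trajectory equals F̄^CT = (3 − 2p − 2q + 2pq)/3. -/
open Real

/-- The average of `f` over the unit sphere for the uniform probability measure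
`sin θ dθ dφ / (4π)`, in the polar angle `θ ∈ [0, π]` and the azimuth `φ ∈ [0, 2π]`, as an
iterated integral with `φ` innermost. -/
noncomputable def sphereAverage (f : ℝ → ℝ → ℝ) : ℝ :=
  (1 / (4 * π)) * ∫ θ in (0 : ℝ)..π, ∫ φ in (0 : ℝ)..(2 * π), f θ φ * sin θ

theorem sphereAverage_add {f g : ℝ → ℝ → ℝ} (hf : Continuous f.uncurry)
    (hg : Continuous g.uncurry) :
    sphereAverage (fun θ φ => f θ φ + g θ φ) = sphereAverage f + sphereAverage g := by
  have weighted {h : ℝ → ℝ → ℝ} (hh : Continuous h.uncurry) :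
      Continuous (fun θ φ => h θ φ * sin θ).uncurry :=
    hh.mul (continuous_sin.comp continuous_fst)
  have inner_integrable {h : ℝ → ℝ → ℝ} (hh : Continuous h.uncurry) (θ : ℝ) :
      IntervalIntegrable (fun φ => h θ φ * sin θ) MeasureTheory.volume 0 (2 * π) :=
    ((weighted hh).uncurry_left θ).intervalIntegrable _ _
  have outer_integrable {h : ℝ → ℝ → ℝ} (hh : Continuous h.uncurry) :
      IntervalIntegrable (fun θ => ∫ φ in (0 : ℝ)..(2 * π), h θ φ * sin θ)
        MeasureTheory.volume 0 π :=
    (intervalIntegral.continuous_parametric_intervalIntegral_of_continuous'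
      (weighted hh) _ _).intervalIntegrable _ _
  simp only [sphereAverage, add_mul,
    intervalIntegral.integral_add (inner_integrable hf _) (inner_integrable hg _)]
  rw [intervalIntegral.integral_add (outer_integrable hf) (outer_integrable hg), mul_add]

theorem sphereAverage_const_mul (c : ℝ) (f : ℝ → ℝ → ℝ) :
    sphereAverage (fun θ φ => c * f θ φ) = c * sphereAverage f := by
  simp only [sphereAverage, mul_assoc, intervalIntegral.integral_const_mul]
  ring

theorem sphereAverage_prod_mul (u v : ℝ → ℝ) :
    sphereAverage (fun θ φ => u θ * v φ) =
      (1 / (4 * π)) * ((∫ θ in (0 : ℝ)..π, u θ * sin θ) * ∫ φ in (0 : ℝ)..(2 * π), v φ) := by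
  simp only [sphereAverage, mul_right_comm _ _ (sin _), intervalIntegral.integral_const_mul,
    intervalIntegral.integral_mul_const]

theorem sphereAverage_sin_pow_even_mul (n : ℕ) (v : ℝ → ℝ) :
    sphereAverage (fun θ φ => sin θ ^ (2 * n) * v φ) =
      (∏ i ∈ Finset.range n, (2 * (i : ℝ) + 2) / (2 * i + 3)) *
        ((1 / (2 * π)) * ∫ φ in (0 : ℝ)..(2 * π), v φ) := by
  simp only [sphereAverage_prod_mul, ← pow_succ, integral_sin_pow_odd]
  ring

theorem sphereAverage_const (c : ℝ) : sphereAverage (fun _ _ => c) = c := by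
  have h := sphereAverage_sin_pow_even_mul 0 fun _ => c
  simp only [mul_zero, pow_zero, one_mul, Finset.range_zero, Finset.prod_empty,
    intervalIntegral.integral_const, sub_zero, smul_eq_mul] at h
  rw [h]
  field_simp

theorem sphereAverage_sin_sq : sphereAverage (fun θ _ => sin θ ^ 2) = 2 / 3 := by
  have h := sphereAverage_sin_pow_even_mul 1 fun _ => 1
  simp only [mul_one, Finset.prod_range_one, Nat.cast_zero, mul_zero, zero_add,
    intervalIntegral.integral_const, sub_zero, smul_eq_mul] at h
  rw [h]
  field_simp

theorem sphereAverage_sin_sq_mul_cos_sq :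
    sphereAverage (fun θ φ => sin θ ^ 2 * cos φ ^ 2) = 1 / 3 := by
  have h := sphereAverage_sin_pow_even_mul 1 fun φ => cos φ ^ 2
  simp only [mul_one, Finset.prod_range_one, Nat.cast_zero, mul_zero, zero_add,
    integral_cos_sq, sin_two_pi, sin_zero, sub_zero] at h
  rw [h]
  field_simp

theorem average_fidelity_classical_trajectory_general (p q : ℝ) :
    (1 / (4 * π)) * ∫ θ in (0 : ℝ)..π, (∫ φ in (0 : ℝ)..(2 * π),
        ((1 - p) - q * (1 - 2 * p) * Real.sin θ ^ 2
          + p * (1 - 2 * q) * Real.sin θ ^ 2 * Real.cos φ ^ 2) * Real.sin θ) =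
      (3 - 2 * p - 2 * q + 2 * p * q) / 3 := by
  change sphereAverage (fun θ φ => (1 - p) - q * (1 - 2 * p) * sin θ ^ 2
    + p * (1 - 2 * q) * sin θ ^ 2 * cos φ ^ 2) = _
  calc
    _ = sphereAverage (fun θ φ => ((1 - p) + -(q * (1 - 2 * p)) * sin θ ^ 2)
          + p * (1 - 2 * q) * (sin θ ^ 2 * cos φ ^ 2)) := by
      simp only [neg_mul, ← sub_eq_add_neg, mul_assoc]
    _ = (1 - p) + -(q * (1 - 2 * p)) * (2 / 3) + p * (1 - 2 * q) * (1 / 3) := by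
      rw [sphereAverage_add (by fun_prop) (by fun_prop),
        sphereAverage_add (by fun_prop) (by fun_prop), sphereAverage_const,
        sphereAverage_const_mul, sphereAverage_const_mul, sphereAverage_sin_sq,
        sphereAverage_sin_sq_mul_cos_sq]
    _ = (3 - 2 * p - 2 * q + 2 * p * q) / 3 := by ring

theorem average_fidelity_classical_trajectory (p q : ℝ)
    (hp : p ∈ Set.Icc (0 : ℝ) 1) (hq : q ∈ Set.Icc (0 : ℝ) 1) :
    (1 / (4 * π)) * ∫ θ in (0 : ℝ)..π, (∫ φ in (0 : ℝ)..(2 * π),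
        ((1 - p) - q * (1 - 2 * p) * Real.sin θ ^ 2
          + p * (1 - 2 * q) * Real.sin θ ^ 2 * Real.cos φ ^ 2) * Real.sin θ) =
      (3 - 2 * p - 2 * q + 2 * p * q) / 3 :=
  average_fidelity_classical_trajectory_general p q
end
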